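/- Let G be a group, k a commutative G-ring, n a natural number, and ε ∈ k invertible. Then there is an isomorphism of graded k-modules Tor_*^{GR_n(ε)}(𝟙,𝟙) ≅ Tor_*^{k[G^n ⋊ Σ_n]}(k,k) = H_*(G^n ⋊ Σ_n; k), where Σ_n acts on G^n by permuting the factors. -/

import Mathlib

open scoped TensorProduct

noncomputable section

/-! ### Bar-complex homology of an augmented algebra

For a `k`-algebra `A` with augmentation `ε : A →ₐ[k] k` (the algebra map corresponding to
the trivial module `𝟙 = k`), we form the (unnormalized) bar complex `C_q = A^{⊗ q}`
(tensors over `k`), with the usual differential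
`d(a₁⊗…⊗a_q) = ε(a₁)(a₂⊗…) + Σ (-1)^i (…a_i a_{i+1}…) + (-1)^q ε(a_q)(a₁⊗…)`,
whose homology is `Tor_*^A(𝟙,𝟙)`. -/

/-- The modules `A^{⊗ q}` of the bar complex. -/
def barC (k : Type) [CommRing k] (A : Type) [Ring A] [Algebra k A] : ℕ → ModuleCat k
  | 0 => ModuleCat.of k k
  | (q + 1) => ModuleCat.of k (A ⊗[k] (barC k A q))

variable (k : Type) [CommRing k] (A : Type) [Ring A] [Algebra k A] (ε : A →ₐ[k] k)

/-- Left multiplication of `A` on the leftmost bar factor (via `ε` in degree `0`). -/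
def barAct : ∀ q : ℕ, A →ₗ[k] ((barC k A q : Type) →ₗ[k] (barC k A q : Type))
  | 0 => (LinearMap.lsmul k k).comp ε.toLinearMap
  | (q + 1) =>
    show A →ₗ[k] ((A ⊗[k] (barC k A q : Type)) →ₗ[k] (A ⊗[k] (barC k A q : Type))) from
    { toFun := fun a => TensorProduct.map (LinearMap.mulLeft k a) LinearMap.id
      map_add' := by
        intro a b
        refine TensorProduct.ext' fun x y => ?_
        simp [add_mul, TensorProduct.add_tmul]
      map_smul' := by
        intro c a
        refine TensorProduct.ext' fun x y => ?_
        simp [TensorProduct.smul_tmul', smul_mul_assoc] }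

/-- All terms of the bar differential except the first face. -/
def barB : ∀ q : ℕ, ((A ⊗[k] (barC k A q : Type)) →ₗ[k] (barC k A q : Type))
  | 0 => - TensorProduct.lift ((LinearMap.lsmul k (barC k A 0 : Type)).comp ε.toLinearMap)
  | (q + 1) =>
    show (A ⊗[k] (A ⊗[k] (barC k A q : Type))) →ₗ[k] (A ⊗[k] (barC k A q : Type)) from
    TensorProduct.lift (LinearMap.mk₂ k
      (fun (a : A) (x : A ⊗[k] (barC k A q : Type)) =>
        -((show A →ₗ[k] ((A ⊗[k] (barC k A q : Type)) →ₗ[k] (A ⊗[k] (barC k A q : Type))) from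
            barAct k A ε (q + 1)) a x) - a ⊗ₜ[k] (barB q x))
      (by intro a b x
          generalize (show A →ₗ[k] ((A ⊗[k] (barC k A q : Type)) →ₗ[k]
            (A ⊗[k] (barC k A q : Type))) from barAct k A ε (q + 1)) = f
          simp only [map_add, LinearMap.add_apply, TensorProduct.add_tmul]
          try abel)
      (by intro c a x
          generalize (show A →ₗ[k] ((A ⊗[k] (barC k A q : Type)) →ₗ[k]
            (A ⊗[k] (barC k A q : Type))) from barAct k A ε (q + 1)) = f
          simp only [map_smul, LinearMap.smul_apply, smul_sub, smul_neg,
            TensorProduct.smul_tmul'])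
      (by intro a x y
          simp only [map_add, LinearMap.map_add, TensorProduct.tmul_add]
          try abel)
      (by intro c a x
          simp only [map_smul, LinearMap.map_smul, TensorProduct.tmul_smul, smul_sub, smul_neg]
          try abel))

/-- The bar differential `C_{q+1} = A ⊗ C_q → C_q`. -/
def bard (q : ℕ) : (A ⊗[k] (barC k A q : Type)) →ₗ[k] (barC k A q : Type) :=
  TensorProduct.lift ((LinearMap.lsmul k (barC k A q : Type)).comp ε.toLinearMap)
  + barB k A ε q

/-- Cycles of the bar complex. -/
def barCycles : ∀ q : ℕ, Submodule k (barC k A q : Type)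
  | 0 => ⊤
  | (q + 1) =>
    show Submodule k (barC k A (q + 1) : Type) from LinearMap.ker (bard k A ε q)

/-- `Tor_q^A(𝟙, 𝟙)`, the homology of the algebra `A` with augmentation (trivial module) `ε`,
computed by the bar complex. -/
def barTor (q : ℕ) : Type :=
  (barCycles k A ε q) ⧸
    (Submodule.comap (barCycles k A ε q).subtype (LinearMap.range (bard k A ε q)))

instance (q : ℕ) : AddCommGroup (barTor k A ε q) :=
  inferInstanceAs (AddCommGroup ((barCycles k A ε q) ⧸
    (Submodule.comap (barCycles k A ε q).subtype (LinearMap.range (bard k A ε q)))))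

instance (q : ℕ) : Module k (barTor k A ε q) :=
  inferInstanceAs (Module k ((barCycles k A ε q) ⧸
    (Submodule.comap (barCycles k A ε q).subtype (LinearMap.range (bard k A ε q)))))

/-- The augmentation of a group algebra `k[G]`, corresponding to the trivial action of `G`
on `k`. -/
def groupAug (G : Type) [Group G] : MonoidAlgebra k G →ₐ[k] k :=
  MonoidAlgebra.lift k k G 1

/-- Group homology `H_*(G; k) = Tor_*^{k[G]}(k, k)` (with the trivial action on `k`). -/
abbrev groupTor (G : Type) [Group G] (q : ℕ) : Type :=
  barTor k (MonoidAlgebra k G) (groupAug k G) q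

section Groups

/-- The action of the symmetric group on `G^n` by permuting the factors. -/
def permMulAut (G : Type) [Group G] (n : ℕ) :
    Equiv.Perm (Fin n) →* MulAut (Fin n → G) where
  toFun σ :=
    { toFun := fun f => f ∘ σ.symm
      invFun := fun f => f ∘ σ
      left_inv := fun f => by funext i; simp
      right_inv := fun f => by funext i; simp
      map_mul' := fun f g => rfl }
  map_one' := by ext f i; rfl
  map_mul' := fun σ τ => by ext f i; rfl

/-- The Artin braid relations, on `m` generators (so for the braid group on `m+1` strands). -/
def braidRels (m : ℕ) : Set (FreeGroup (Fin m)) :=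
  { x | ∃ i j : Fin m,
      ((i : ℕ) + 1 = (j : ℕ) ∧
        x = .of i * .of j * .of i * (.of j * .of i * .of j)⁻¹) ∨
      ((i : ℕ) + 1 < (j : ℕ) ∧
        x = .of i * .of j * (.of j * .of i)⁻¹) }

/-- The braid group `B_n` on `n` strands, presented by the Artin generators
`σ_1, …, σ_{n-1}` and the braid relations. -/
abbrev BraidGroup (n : ℕ) : Type := PresentedGroup (braidRels (n - 1))

private lemma swap_braid {α : Type} [DecidableEq α] (a b c : α)
    (hab : a ≠ b) (hac : a ≠ c) (hbc : b ≠ c) :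
    Equiv.swap a b * Equiv.swap b c * Equiv.swap a b
      = Equiv.swap b c * Equiv.swap a b * Equiv.swap b c := by
  have h1 : Equiv.swap b c * Equiv.swap a b * Equiv.swap b c = Equiv.swap c a :=
    Equiv.swap_mul_swap_mul_swap hab hac
  have h2 : Equiv.swap b a * Equiv.swap c b * Equiv.swap b a = Equiv.swap a c :=
    Equiv.swap_mul_swap_mul_swap hbc.symm hac.symm
  rw [Equiv.swap_comm b a, Equiv.swap_comm c b] at h2
  rw [h1, h2, Equiv.swap_comm]

private lemma swap_swap_comm {α : Type} [DecidableEq α] (a b c d : α)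
    (hac : a ≠ c) (had : a ≠ d) (hbc : b ≠ c) (hbd : b ≠ d) :
    Equiv.swap a b * Equiv.swap c d = Equiv.swap c d * Equiv.swap a b := by
  have h := Equiv.swap_apply_apply (Equiv.swap c d) a b
  rw [Equiv.swap_apply_of_ne_of_ne hac had, Equiv.swap_apply_of_ne_of_ne hbc hbd] at h
  exact eq_mul_inv_iff_mul_eq.mp h

/-- The transpositions which are the images of the braid generators. -/
def braidGen (n : ℕ) (i : Fin (n - 1)) : Equiv.Perm (Fin n) :=
  Equiv.swap ⟨(i : ℕ), by have := i.2; omega⟩ ⟨(i : ℕ) + 1, by have := i.2; omega⟩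

private lemma braidGen_braid (n : ℕ) (i j : Fin (n - 1)) (hij : (i : ℕ) + 1 = (j : ℕ)) :
    braidGen n i * braidGen n j * braidGen n i
      = braidGen n j * braidGen n i * braidGen n j := by
  obtain ⟨i, hi⟩ := i
  obtain ⟨j, hj⟩ := j
  simp only at hij
  subst hij
  unfold braidGen
  exact swap_braid _ _ _ (by simp only [ne_eq, Fin.mk.injEq]; omega)
    (by simp only [ne_eq, Fin.mk.injEq]; omega) (by simp only [ne_eq, Fin.mk.injEq]; omega)

private lemma braidGen_comm (n : ℕ) (i j : Fin (n - 1)) (hij : (i : ℕ) + 1 < (j : ℕ)) :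
    braidGen n i * braidGen n j = braidGen n j * braidGen n i := by
  unfold braidGen
  exact swap_swap_comm _ _ _ _ (by simp only [ne_eq, Fin.mk.injEq]; omega)
    (by simp only [ne_eq, Fin.mk.injEq]; omega) (by simp only [ne_eq, Fin.mk.injEq]; omega)
    (by simp only [ne_eq, Fin.mk.injEq]; omega)

/-- The canonical projection from the braid group to the symmetric group. -/
def braidToPerm (n : ℕ) : BraidGroup n →* Equiv.Perm (Fin n) :=
  PresentedGroup.toGroup (f := braidGen n) (by
    rintro r ⟨i, j, (⟨hij, rfl⟩ | ⟨hij, rfl⟩)⟩ <;>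
      simp only [map_mul, map_inv, FreeGroup.lift_apply_of] <;> rw [mul_inv_eq_one]
    · exact braidGen_braid n i j hij
    · exact braidGen_comm n i j hij)

end Groups

section GRsection

/-! The `G`-equivariant rook algebra `GR_n(ε)`: generators `s i` (transposition of
strands `i, i+1`), `p j` (deleted strand `j`) and `t g j` (identity with strand `j`
labelled `g : G`); a contractible middle component contributes the factor `ε`. -/

inductive GRGen (n : ℕ) (G : Type) : Type
  | s : Fin (n - 1) → GRGen n G
  | p : Fin n → GRGen n G
  | t : G → Fin n → GRGen n G

variable (k G : Type) [CommRing k] [Group G] (n : ℕ) (ε : k)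

abbrev GRs (i : Fin (n - 1)) : FreeAlgebra k (GRGen n G) := FreeAlgebra.ι k (GRGen.s i)
abbrev GRp (j : Fin n) : FreeAlgebra k (GRGen n G) := FreeAlgebra.ι k (GRGen.p j)
abbrev GRt (g : G) (j : Fin n) : FreeAlgebra k (GRGen n G) := FreeAlgebra.ι k (GRGen.t g j)

/-- The diagrammatic relations. -/
inductive GRRel : FreeAlgebra k (GRGen n G) → FreeAlgebra k (GRGen n G) → Prop
  | s_sq (i : Fin (n - 1)) :
      GRRel (GRs k G n i * GRs k G n i) (1)
  | s_braid (i j : Fin (n - 1)) (h : (j : ℕ) = (i : ℕ) + 1) :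
      GRRel (GRs k G n i * GRs k G n j * GRs k G n i) (GRs k G n j * GRs k G n i * GRs k G n j)
  | ss_comm (i j : Fin (n - 1)) (h : (i : ℕ) + 1 < (j : ℕ)) :
      GRRel (GRs k G n i * GRs k G n j) (GRs k G n j * GRs k G n i)
  | p_sq (j : Fin n) :
      GRRel (GRp k G n j * GRp k G n j) (ε • GRp k G n j)
  | pp_comm (j l : Fin n) (h : (j : ℕ) < (l : ℕ)) :
      GRRel (GRp k G n j * GRp k G n l) (GRp k G n l * GRp k G n j)
  | sp_comm (i : Fin (n - 1)) (l : Fin n) (h : (l : ℕ) ≠ (i : ℕ) ∧ (l : ℕ) ≠ (i : ℕ) + 1) :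
      GRRel (GRs k G n i * GRp k G n l) (GRp k G n l * GRs k G n i)
  | sp_slide (i : Fin (n - 1)) (j j' : Fin n) (h : (j : ℕ) = (i : ℕ)) (h' : (j' : ℕ) = (i : ℕ) + 1) :
      GRRel (GRs k G n i * GRp k G n j) (GRp k G n j' * GRs k G n i)
  | sp_slide' (i : Fin (n - 1)) (j j' : Fin n) (h : (j : ℕ) = (i : ℕ)) (h' : (j' : ℕ) = (i : ℕ) + 1) :
      GRRel (GRs k G n i * GRp k G n j') (GRp k G n j * GRs k G n i)
  | psp (i : Fin (n - 1)) (j j' : Fin n) (h : (j : ℕ) = (i : ℕ)) (h' : (j' : ℕ) = (i : ℕ) + 1) :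
      GRRel (GRp k G n j * GRs k G n i * GRp k G n j) (GRp k G n j * GRp k G n j')
  | t_mul (g h' : G) (j : Fin n) :
      GRRel (GRt k G n g j * GRt k G n h' j) (GRt k G n (g * h') j)
  | t_one (j : Fin n) :
      GRRel (GRt k G n 1 j) (1)
  | tt_comm (g h' : G) (j l : Fin n) (h : j ≠ l) :
      GRRel (GRt k G n g j * GRt k G n h' l) (GRt k G n h' l * GRt k G n g j)
  | st_comm (g : G) (i : Fin (n - 1)) (l : Fin n) (h : (l : ℕ) ≠ (i : ℕ) ∧ (l : ℕ) ≠ (i : ℕ) + 1) :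
      GRRel (GRs k G n i * GRt k G n g l) (GRt k G n g l * GRs k G n i)
  | st_slide (g : G) (i : Fin (n - 1)) (j j' : Fin n) (h : (j : ℕ) = (i : ℕ)) (h' : (j' : ℕ) = (i : ℕ) + 1) :
      GRRel (GRs k G n i * GRt k G n g j) (GRt k G n g j' * GRs k G n i)
  | st_slide' (g : G) (i : Fin (n - 1)) (j j' : Fin n) (h : (j : ℕ) = (i : ℕ)) (h' : (j' : ℕ) = (i : ℕ) + 1) :
      GRRel (GRs k G n i * GRt k G n g j') (GRt k G n g j * GRs k G n i)
  | tp_absorb (g : G) (j : Fin n) :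
      GRRel (GRt k G n g j * GRp k G n j) (GRp k G n j)
  | pt_absorb (g : G) (j : Fin n) :
      GRRel (GRp k G n j * GRt k G n g j) (GRp k G n j)
  | tp_comm (g : G) (j l : Fin n) (h : j ≠ l) :
      GRRel (GRt k G n g j * GRp k G n l) (GRp k G n l * GRt k G n g j)

/-- The diagram algebra: the quotient of the free algebra on the diagram generators by
the diagrammatic relations. -/
abbrev GRAlg : Type := RingQuot (GRRel k G n ε)

/-- The augmentation corresponding to the trivial module `𝟙`: a diagram acts by `1`
if it has `n` left-to-right connections, and by `0` otherwise. -/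
noncomputable def GRaug : GRAlg k G n ε →ₐ[k] k :=
  RingQuot.liftAlgHom k ⟨FreeAlgebra.lift k
      (fun x => match x with
        | GRGen.s _ => (1 : k)
        | GRGen.p _ => (0 : k)
        | GRGen.t _ _ => (1 : k)),
    by rintro x y h
       induction h <;>
         simp [GRs, GRp, GRt, FreeAlgebra.lift_ι_apply]⟩

end GRsection


/-!
The elements `p_j / ε` are commuting idempotents of `GR_n(ε)`, permuted by conjugation with the
adjacent transpositions and centralised by the labels. Hence `f = ∏ j, (1 - p_j / ε)` is a central
idempotent; it has augmentation `1` and annihilates every diagram with a deleted strand.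

Multiplication by a central idempotent of augmentation `1` is chain homotopic to the identity of
the bar complex, so `Tor(𝟙, 𝟙)` only sees the corner `f GR_n(ε)`. This corner is `k[G^n ⋊ Σ_n]`:
killing the `p_j` gives a projection `GR_n(ε) → k[G^n ⋊ Σ_n]`, the Coxeter presentation of `Σ_n`
gives a section of it, and the composite endomorphism of `GR_n(ε)` fixes the generators other than
the `p_j`, hence is the identity after multiplication by `f`.
-/

section BarComplex

open LinearMap (mulLeft)

section Faces

variable {k A B M N : Type*} [CommRing k] [Ring A] [Algebra k A] [Ring B] [Algebra k B]
  [AddCommGroup M] [Module k M] [AddCommGroup N] [Module k N]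

/-- The first face `a ⊗ x ↦ ε(a) x` of the bar differential. -/
def augFace (ε : A →ₐ[k] k) : A ⊗[k] M →ₗ[k] M :=
  TensorProduct.lift ((LinearMap.lsmul k M).comp ε.toLinearMap)

lemma augFace_tmul (ε : A →ₐ[k] k) (a : A) (x : M) : augFace ε (a ⊗ₜ[k] x) = ε a • x := rfl

lemma map_augFace (ε : A →ₐ[k] k) (η : B →ₐ[k] k) {φ : A →ₗ[k] B} (hφ : ∀ a, η (φ a) = ε a)
    (m : M →ₗ[k] N) : m ∘ₗ augFace ε = augFace η ∘ₗ TensorProduct.map φ m :=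
  TensorProduct.ext' fun a x => by
    simp only [LinearMap.comp_apply, TensorProduct.map_tmul, augFace_tmul, map_smul, hφ]

/-- The recursion expressing the non-initial faces of the bar differential in one degree
through those in the degree below, called `b`: either multiply the first two factors, or keep
the first factor and apply `b` to the rest. -/
def tailFaces (b : A ⊗[k] M →ₗ[k] M) : A ⊗[k] (A ⊗[k] M) →ₗ[k] A ⊗[k] M :=
  -TensorProduct.lift (Algebra.lsmul k k (A ⊗[k] M)).toLinearMap - b.lTensor A

lemma tailFaces_tmul (b : A ⊗[k] M →ₗ[k] M) (a : A) (x : A ⊗[k] M) :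
    tailFaces b (a ⊗ₜ[k] x) = -(a • x) - a ⊗ₜ[k] b x := rfl

lemma map_mulLeft_id_apply (a : A) (x : A ⊗[k] M) :
    TensorProduct.map (mulLeft k a) LinearMap.id x = a • x := by
  induction x using TensorProduct.induction_on with
  | zero => rw [map_zero, smul_zero]
  | add x y hx hy => rw [map_add, smul_add, hx, hy]
  | tmul b y => rfl

lemma map_smul_of_map_mul {φ : A →ₗ[k] B} (hφ : ∀ a b, φ (a * b) = φ a * φ b)
    (m : M →ₗ[k] N) (a : A) (x : A ⊗[k] M) :
    TensorProduct.map φ m (a • x) = φ a • TensorProduct.map φ m x := by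
  induction x using TensorProduct.induction_on with
  | zero => simp only [smul_zero, map_zero]
  | add x y hx hy => simp only [smul_add, map_add, hx, hy]
  | tmul b y =>
    simp only [TensorProduct.smul_tmul', smul_eq_mul, TensorProduct.map_tmul, hφ]

lemma map_tailFaces {φ : A →ₗ[k] B} (hφ : ∀ a b, φ (a * b) = φ a * φ b) {m : M →ₗ[k] N}
    {b : A ⊗[k] M →ₗ[k] M} {b' : B ⊗[k] N →ₗ[k] N}
    (hb : m ∘ₗ b = b' ∘ₗ TensorProduct.map φ m) :
    TensorProduct.map φ m ∘ₗ tailFaces b =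
      tailFaces b' ∘ₗ TensorProduct.map φ (TensorProduct.map φ m) :=
  TensorProduct.ext' fun a x => by
    simp only [LinearMap.comp_apply, tailFaces_tmul, TensorProduct.map_tmul, map_sub, map_neg,
      map_smul_of_map_mul hφ]
    rw [← LinearMap.comp_apply m b, hb, LinearMap.comp_apply]

/-- The recursion `(a ⊗ x) ↦ f ⊗ f a ⊗ m x - a ⊗ h x` for the homotopy from the identity to
the chain map induced by multiplication by a central idempotent `f`. Here `m` is that chain map
and `h` the homotopy, both in the degree below. -/
def homotopyStep (f : A) (m : M →ₗ[k] M) (h : M →ₗ[k] A ⊗[k] M) :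
    A ⊗[k] M →ₗ[k] A ⊗[k] (A ⊗[k] M) :=
  TensorProduct.mk k A (A ⊗[k] M) f ∘ₗ TensorProduct.map (mulLeft k f) m - h.lTensor A

lemma homotopyStep_tmul (f : A) (m : M →ₗ[k] M) (h : M →ₗ[k] A ⊗[k] M) (a : A) (x : M) :
    homotopyStep f m h (a ⊗ₜ[k] x) = f ⊗ₜ[k] ((f * a) ⊗ₜ[k] m x) - a ⊗ₜ[k] h x := rfl

lemma homotopyStep_smul {f : A} (hf : f ∈ Subalgebra.center k A) (m : M →ₗ[k] M)
    (h : M →ₗ[k] A ⊗[k] M) (a : A) (x : A ⊗[k] M) :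
    homotopyStep f m h (a • x) = a • homotopyStep f m h x
      + f ⊗ₜ[k] TensorProduct.map (mulLeft k f) m (a • x)
      - (f * a) ⊗ₜ[k] TensorProduct.map (mulLeft k f) m x := by
  induction x using TensorProduct.induction_on with
  | zero => simp only [smul_zero, map_zero, TensorProduct.tmul_zero, add_zero, sub_zero]
  | add x y hx hy =>
    simp only [smul_add, map_add, hx, hy, TensorProduct.tmul_add]
    abel
  | tmul c y =>
    simp only [homotopyStep_tmul, smul_sub, TensorProduct.smul_tmul', smul_eq_mul,
      TensorProduct.map_tmul, LinearMap.mulLeft_apply, Subalgebra.mem_center_iff.1 hf a]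
    abel

lemma tailFaces_homotopyStep_zero {ε : A →ₐ[k] k} {f : A} (hf : f ∈ Subalgebra.center k A)
    (hff : IsIdempotentElem f) (hε : ε f = 1) :
    tailFaces (-augFace ε) ∘ₗ homotopyStep f LinearMap.id (TensorProduct.mk k A M f)
      + TensorProduct.mk k A M f ∘ₗ (-augFace ε) = -LinearMap.id :=
  TensorProduct.ext' fun a x => by
    simp only [LinearMap.add_apply, LinearMap.comp_apply, LinearMap.neg_apply, LinearMap.id_apply,
      homotopyStep_tmul, map_sub, tailFaces_tmul, augFace_tmul, TensorProduct.smul_tmul',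
      TensorProduct.mk_apply, TensorProduct.tmul_neg, TensorProduct.tmul_smul, smul_eq_mul,
      map_mul, hε, one_mul, one_smul, ← mul_assoc, hff.eq, Subalgebra.mem_center_iff.1 hf a]
    abel

lemma mulLeft_mul {f : A} (hf : f ∈ Subalgebra.center k A) (hff : IsIdempotentElem f) (a c : A) :
    mulLeft k f (a * c) = mulLeft k f a * mulLeft k f c := by
  simp only [LinearMap.mulLeft_apply]
  rw [mul_assoc f a, ← mul_assoc a f, Subalgebra.mem_center_iff.1 hf a, ← mul_assoc f (f * a),
    ← mul_assoc f f, hff.eq, mul_assoc]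

lemma tailFaces_homotopyStep_succ {f : A} (hf : f ∈ Subalgebra.center k A)
    (hff : IsIdempotentElem f) {m : M →ₗ[k] M} {b : A ⊗[k] M →ₗ[k] M}
    {h : M →ₗ[k] A ⊗[k] M} (hb : m ∘ₗ b = b ∘ₗ TensorProduct.map (mulLeft k f) m)
    (hh : tailFaces b ∘ₗ homotopyStep f m h + h ∘ₗ b = -LinearMap.id) :
    tailFaces (tailFaces b) ∘ₗ
        homotopyStep f (TensorProduct.map (mulLeft k f) m) (homotopyStep f m h)
      + homotopyStep f m h ∘ₗ tailFaces b = -LinearMap.id := by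
  have hT (y : A ⊗[k] M) : tailFaces b (homotopyStep f m h y) = -y - h (b y) :=
    eq_sub_of_add_eq (LinearMap.congr_fun hh y)
  refine TensorProduct.ext' fun a x => ?_
  have hfirst : f • (f * a) ⊗ₜ[k] TensorProduct.map (mulLeft k f) m x =
      (f * a) ⊗ₜ[k] TensorProduct.map (mulLeft k f) m x := by
    rw [TensorProduct.smul_tmul', smul_eq_mul, ← mul_assoc, hff.eq]
  have hshift : tailFaces b ((f * a) ⊗ₜ[k] TensorProduct.map (mulLeft k f) m x) =
      -TensorProduct.map (mulLeft k f) m (a • x) - (f * a) ⊗ₜ[k] m (b x) := by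
    simpa only [LinearMap.comp_apply, tailFaces_tmul, map_sub, map_neg, TensorProduct.map_tmul,
      LinearMap.mulLeft_apply] using
      (LinearMap.congr_fun (map_tailFaces (mulLeft_mul hf hff) hb) (a ⊗ₜ[k] x)).symm
  simp only [LinearMap.add_apply, LinearMap.comp_apply, LinearMap.neg_apply, LinearMap.id_apply]
  rw [homotopyStep_tmul, map_sub, tailFaces_tmul, tailFaces_tmul (tailFaces b) a, hfirst, hT,
    tailFaces_tmul b a, map_sub, map_neg, homotopyStep_smul hf, homotopyStep_tmul, hshift]
  simp only [TensorProduct.tmul_sub, TensorProduct.tmul_neg]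
  abel

lemma augFace_homotopyStep {ε : A →ₐ[k] k} {f : A} (hε : ε f = 1) (m : M →ₗ[k] M)
    (h : M →ₗ[k] A ⊗[k] M) :
    augFace ε ∘ₗ homotopyStep f m h + h ∘ₗ augFace ε = TensorProduct.map (mulLeft k f) m :=
  TensorProduct.ext' fun a x => by
    simp only [LinearMap.add_apply, LinearMap.comp_apply, homotopyStep_tmul, map_sub,
      augFace_tmul, hε, one_smul, map_smul, TensorProduct.map_tmul, LinearMap.mulLeft_apply,
      sub_add_cancel]

lemma map_mulLeft_sub_mem_range {ε : A →ₐ[k] k} {f : A} (hε : ε f = 1)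
    {m : M →ₗ[k] M} {b : A ⊗[k] M →ₗ[k] M} {h : M →ₗ[k] A ⊗[k] M}
    (hh : tailFaces b ∘ₗ homotopyStep f m h + h ∘ₗ b = -LinearMap.id)
    {x : A ⊗[k] M} (hx : (augFace (M := M) ε + b) x = 0) :
    TensorProduct.map (mulLeft k f) m x - x ∈ LinearMap.range (augFace ε + tailFaces b) := by
  have hfirst : augFace ε (homotopyStep f m h x) + h (augFace ε x) =
      TensorProduct.map (mulLeft k f) m x := LinearMap.congr_fun (augFace_homotopyStep hε m h) x
  have htail : tailFaces b (homotopyStep f m h x) + h (b x) = -x := LinearMap.congr_fun hh x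
  have hcycle : h (augFace ε x) + h (b x) = 0 := by
    rw [← map_add, ← LinearMap.add_apply, hx, map_zero]
  refine ⟨homotopyStep f m h x, ?_⟩
  rw [LinearMap.add_apply, sub_eq_add_neg, ← hfirst, ← htail, add_add_add_comm, hcycle, add_zero]

end Faces

section Subquotient

variable {k X Y W : Type*} [CommRing k] [AddCommGroup X] [Module k X] [AddCommGroup Y]
  [Module k Y] [AddCommGroup W] [Module k W] {Z B : Submodule k X} {Z' B' : Submodule k Y}
  {Z'' B'' : Submodule k W}

/-- The map `Z / (Z ∩ B) → Z' / (Z' ∩ B')` induced by a linear map `F` with `F Z ⊆ Z'` and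
`F B ⊆ B'`. -/
def subquotientMap (F : X →ₗ[k] Y) (hZ : ∀ x ∈ Z, F x ∈ Z') (hB : ∀ x ∈ B, F x ∈ B') :
    Z ⧸ B.comap Z.subtype →ₗ[k] Z' ⧸ B'.comap Z'.subtype :=
  Submodule.mapQ _ _ (F.restrict hZ) fun x hx => hB x hx

lemma subquotientMap_comp {F : X →ₗ[k] Y} (hZ : ∀ x ∈ Z, F x ∈ Z') (hB : ∀ x ∈ B, F x ∈ B')
    {F' : Y →ₗ[k] W} (hZ' : ∀ y ∈ Z', F' y ∈ Z'') (hB' : ∀ y ∈ B', F' y ∈ B'') :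
    subquotientMap F' hZ' hB' ∘ₗ subquotientMap F hZ hB =
      subquotientMap (F' ∘ₗ F) (fun x hx => hZ' _ (hZ x hx)) (fun x hx => hB' _ (hB x hx)) :=
  Submodule.linearMap_qext _ rfl

lemma subquotientMap_eq_id {F : X →ₗ[k] X} (hZ : ∀ x ∈ Z, F x ∈ Z) (hB : ∀ x ∈ B, F x ∈ B)
    (hF : ∀ x ∈ Z, F x - x ∈ B) : subquotientMap F hZ hB = LinearMap.id :=
  Submodule.linearMap_qext _ <| LinearMap.ext fun x => (Submodule.Quotient.eq _).2 (hF x x.2)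

end Subquotient

section Homology

variable {k A B C : Type} [CommRing k] [Ring A] [Algebra k A] [Ring B] [Algebra k B]
  [Ring C] [Algebra k C] {ε : A →ₐ[k] k} {η : B →ₐ[k] k} {θ : C →ₐ[k] k}

lemma barB_succ (ε : A →ₐ[k] k) (q : ℕ) : barB k A ε (q + 1) = tailFaces (barB k A ε q) :=
  TensorProduct.ext' fun a x =>
    congrArg (fun y => -y - a ⊗ₜ[k] barB k A ε q x) (map_mulLeft_id_apply a x)

/-- The map of bar complexes induced by a linear map `φ`; in degree `q` it is `φ^{⊗ q}`. -/
def barMap (φ : A →ₗ[k] B) : ∀ q : ℕ, (barC k A q : Type) →ₗ[k] (barC k B q : Type)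
  | 0 => (LinearMap.id : k →ₗ[k] k)
  | q + 1 =>
    show A ⊗[k] (barC k A q : Type) →ₗ[k] B ⊗[k] (barC k B q : Type) from
      TensorProduct.map φ (barMap φ q)

lemma barMap_succ (φ : A →ₗ[k] B) (q : ℕ) :
    barMap φ (q + 1) = TensorProduct.map φ (barMap φ q) := rfl

lemma barMap_id (q : ℕ) : barMap (LinearMap.id : A →ₗ[k] A) q = LinearMap.id := by
  induction q with
  | zero => rfl
  | succ q ih => rw [barMap_succ, ih]; exact TensorProduct.map_id

lemma barMap_comp (ψ : B →ₗ[k] C) (φ : A →ₗ[k] B) (q : ℕ) :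
    barMap (ψ ∘ₗ φ) q = barMap ψ q ∘ₗ barMap φ q := by
  induction q with
  | zero => rfl
  | succ q ih => rw [barMap_succ, ih]; exact TensorProduct.map_comp ..

lemma barMap_comp_barB (φ : A →ₙₐ[k] B) (hφ : ∀ a, η (φ a) = ε a) (q : ℕ) :
    barMap φ q ∘ₗ barB k A ε q = barB k B η q ∘ₗ TensorProduct.map φ (barMap φ q) := by
  induction q with
  | zero =>
    exact congrArg Neg.neg (map_augFace (M := k) ε η (φ := (φ : A →ₗ[k] B)) hφ LinearMap.id)
  | succ q ih =>
    rw [barB_succ, barB_succ]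
    exact map_tailFaces (map_mul φ) ih

lemma bard_eq (ε : A →ₐ[k] k) (q : ℕ) : bard k A ε q = augFace ε + barB k A ε q := rfl

lemma barMap_bard (φ : A →ₙₐ[k] B) (hφ : ∀ a, η (φ a) = ε a) (q : ℕ)
    (x : A ⊗[k] (barC k A q : Type)) :
    barMap φ q (bard k A ε q x) = bard k B η q (TensorProduct.map φ (barMap φ q) x) := by
  have h : barMap φ q ∘ₗ bard k A ε q =
      bard k B η q ∘ₗ TensorProduct.map φ (barMap φ q) := by
    rw [bard_eq, bard_eq, LinearMap.comp_add, LinearMap.add_comp, barMap_comp_barB φ hφ,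
      map_augFace ε η (φ := (φ : A →ₗ[k] B)) hφ]
  exact LinearMap.congr_fun h x

lemma barMap_mem_barCycles (φ : A →ₙₐ[k] B) (hφ : ∀ a, η (φ a) = ε a) (q : ℕ) :
    ∀ x ∈ barCycles k A ε q, barMap φ q x ∈ barCycles k B η q := by
  cases q with
  | zero => exact fun _ _ => Submodule.mem_top
  | succ q =>
    intro x hx
    have hx : bard k A ε q x = 0 := hx
    exact (barMap_bard φ hφ q x).symm.trans (by rw [hx, map_zero])

lemma barMap_mem_range_bard (φ : A →ₙₐ[k] B) (hφ : ∀ a, η (φ a) = ε a) (q : ℕ) :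
    ∀ x ∈ LinearMap.range (bard k A ε q), barMap φ q x ∈ LinearMap.range (bard k B η q) := by
  rintro _ ⟨x, rfl⟩
  exact ⟨_, (barMap_bard φ hφ q x).symm⟩

/-- The map on `Tor(𝟙, 𝟙)` induced by a not necessarily unital homomorphism `φ` compatible with
the augmentations. Allowing `φ 1 ≠ 1` makes multiplication by a central idempotent
an example. -/
def barTorMap (φ : A →ₙₐ[k] B) (hφ : ∀ a, η (φ a) = ε a) (q : ℕ) :
    barTor k A ε q →ₗ[k] barTor k B η q :=
  subquotientMap (barMap φ q) (barMap_mem_barCycles φ hφ q) (barMap_mem_range_bard φ hφ q)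

lemma barTorMap_comp (ψ : B →ₙₐ[k] C) (hψ : ∀ b, θ (ψ b) = η b) (φ : A →ₙₐ[k] B)
    (hφ : ∀ a, η (φ a) = ε a) (χ : A →ₙₐ[k] C) (hχ : ∀ a, θ (χ a) = ε a)
    (h : ∀ a, ψ (φ a) = χ a) (q : ℕ) :
    barTorMap ψ hψ q ∘ₗ barTorMap φ hφ q = barTorMap χ hχ q := by
  obtain rfl : ψ.comp φ = χ := NonUnitalAlgHom.ext h
  refine (subquotientMap_comp _ _ _ _).trans ?_
  congr 1
  exact (barMap_comp (ψ : B →ₗ[k] C) (φ : A →ₗ[k] B) q).symm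

lemma barTorMap_id (q : ℕ) :
    barTorMap (NonUnitalAlgHom.id k A) (fun _ => rfl : ∀ a, ε _ = ε a) q = LinearMap.id :=
  subquotientMap_eq_id _ _ fun x _ => by
    have hx : barMap (NonUnitalAlgHom.id k A : A →ₗ[k] A) q x = x :=
      LinearMap.congr_fun (barMap_id q) x
    rw [hx, sub_self]
    exact Submodule.zero_mem _

/-- The homotopy from the identity to multiplication by a central idempotent `f`: up to signs,
`a₁ ⊗ ⋯ ⊗ a_q ↦ ∑ a₁ ⊗ ⋯ ⊗ a_i ⊗ f ⊗ f a_{i+1} ⊗ ⋯ ⊗ f a_q`. -/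
def barHomotopy (f : A) : ∀ q : ℕ, (barC k A q : Type) →ₗ[k] A ⊗[k] (barC k A q : Type)
  | 0 => TensorProduct.mk k A (barC k A 0 : Type) f
  | q + 1 => homotopyStep f (barMap (mulLeft k f) q) (barHomotopy f q)

/-- Multiplication by a central idempotent `f`, as an endomorphism of non-unital algebras. -/
def centralIdempotentMul (f : A) (hf : f ∈ Subalgebra.center k A) (hff : IsIdempotentElem f) :
    A →ₙₐ[k] A :=
  { mulLeft k f with
    map_zero' := mul_zero f
    map_mul' := mulLeft_mul hf hff }

section CentralIdempotent

variable {f : A} (hf : f ∈ Subalgebra.center k A) (hff : IsIdempotentElem f)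

lemma map_centralIdempotentMul (hε : ε f = 1) (a : A) :
    ε (centralIdempotentMul f hf hff a) = ε a := by
  change ε (f * a) = ε a
  rw [map_mul, hε, one_mul]

include hf hff in
lemma barB_comp_homotopyStep (hε : ε f = 1) (q : ℕ) :
    tailFaces (barB k A ε q) ∘ₗ homotopyStep f (barMap (mulLeft k f) q) (barHomotopy f q)
      + barHomotopy f q ∘ₗ barB k A ε q = -LinearMap.id := by
  induction q with
  | zero => exact tailFaces_homotopyStep_zero (M := k) hf hff hε
  | succ q ih =>
    rw [barB_succ]
    exact tailFaces_homotopyStep_succ hf hff (barMap_comp_barB (centralIdempotentMul f hf hff)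
      (map_centralIdempotentMul hf hff hε) q) ih

lemma barTorMap_centralIdempotentMul (hε : ε f = 1) (q : ℕ) :
    barTorMap (centralIdempotentMul f hf hff) (map_centralIdempotentMul hf hff hε) q =
      LinearMap.id := by
  refine subquotientMap_eq_id _ _ fun x hx => ?_
  cases q with
  | zero =>
    convert Submodule.zero_mem _
    exact sub_self _
  | succ q =>
    have hx : bard k A ε q x = 0 := hx
    rw [bard_eq, barB_succ]
    exact map_mulLeft_sub_mem_range hε (barB_comp_homotopyStep hf hff hε q) hx

end CentralIdempotent

/-- An algebra retract `π : A → B`, `σ : B → A` induces isomorphisms on `Tor(𝟙, 𝟙)` as soon as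
`σ ∘ π` becomes the identity after multiplication by a central idempotent `f` with
`ε f = 1`. -/
def barTorEquivOfRetract {f : A} (hf : f ∈ Subalgebra.center k A) (hff : IsIdempotentElem f)
    (hε : ε f = 1) (π : A →ₐ[k] B) (σ : B →ₐ[k] A) (hπ : ∀ a, η (π a) = ε a)
    (hπσ : ∀ b, π (σ b) = b) (hσπ : ∀ a, f * σ (π a) = f * a) (q : ℕ) :
    barTor k A ε q ≃ₗ[k] barTor k B η q :=
  have hσ (b : B) : ε (σ b) = η b := by rw [← hπ, hπσ]
  LinearEquiv.ofLinearMap (barTorMap (π : A →ₙₐ[k] B) hπ q) (barTorMap (σ : B →ₙₐ[k] A) hσ q)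
    ((barTorMap_comp _ _ _ _ _ _ hπσ q).trans (barTorMap_id q)) <| by
    let μ := centralIdempotentMul f hf hff
    let ψ := (σ : B →ₙₐ[k] A).comp (π : A →ₙₐ[k] B)
    have hψ (a : A) : ε (ψ a) = ε a := (hσ (π a)).trans (hπ a)
    have hμ := map_centralIdempotentMul hf hff hε
    have hμid := barTorMap_centralIdempotentMul hf hff hε q
    calc _ = barTorMap ψ hψ q := barTorMap_comp _ _ _ _ _ _ (fun _ => rfl) q
      _ = barTorMap μ hμ q ∘ₗ barTorMap ψ hψ q := by rw [hμid, LinearMap.id_comp]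
      _ = barTorMap μ hμ q := barTorMap_comp _ _ _ _ _ _ hσπ q
      _ = LinearMap.id := hμid

end Homology

end BarComplex

section SymmetricGroup

section BraidGen

variable {n : ℕ} {i : Fin (n - 1)} {j j' : Fin n}

lemma braidGen_apply_left (h : (j : ℕ) = i) (h' : (j' : ℕ) = i + 1) : braidGen n i j = j' := by
  obtain ⟨j, hj⟩ := j
  obtain ⟨j', hj'⟩ := j'
  obtain rfl : j = i := h
  obtain rfl : j' = i + 1 := h'
  exact Equiv.swap_apply_left _ _

lemma braidGen_apply_right (h : (j : ℕ) = i) (h' : (j' : ℕ) = i + 1) : braidGen n i j' = j := by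
  rw [← braidGen_apply_left h h']
  exact Equiv.swap_apply_self _ _ _

lemma braidGen_apply_of_ne (h : (j : ℕ) ≠ i) (h' : (j : ℕ) ≠ i + 1) : braidGen n i j = j :=
  Equiv.swap_apply_of_ne_of_ne (fun e => h (congrArg Fin.val e)) fun e => h' (congrArg Fin.val e)

lemma braidGen_apply_cases {P : Fin n → Fin n → Prop} (i : Fin (n - 1)) (j : Fin n)
    (hne : ∀ j : Fin n, (j : ℕ) ≠ i ∧ (j : ℕ) ≠ i + 1 → P j j)
    (hleft : ∀ j j' : Fin n, (j : ℕ) = i → (j' : ℕ) = i + 1 → P j j')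
    (hright : ∀ j j' : Fin n, (j : ℕ) = i → (j' : ℕ) = i + 1 → P j' j) :
    P j (braidGen n i j) := by
  by_cases h : (j : ℕ) = i
  · rw [braidGen_apply_left (j' := ⟨i + 1, by omega⟩) h rfl]
    exact hleft _ _ h rfl
  by_cases h' : (j : ℕ) = i + 1
  · rw [braidGen_apply_right (j := ⟨i, by omega⟩) rfl h']
    exact hright _ _ rfl h'
  · rw [braidGen_apply_of_ne h h']
    exact hne _ ⟨h, h'⟩

lemma mclosure_range_braidGen (n : ℕ) : Submonoid.closure (Set.range (braidGen n)) = ⊤ := by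
  cases n with
  | zero => exact Subsingleton.elim _ _
  | succ n => exact Equiv.Perm.mclosure_swap_castSucc_succ n

end BraidGen

/-- The Coxeter relations of type `A_m` for `x 0, …, x (m - 1)`; the remaining values of `x` are
unconstrained. -/
structure IsCoxeterFamily {N : Type*} [Monoid N] (x : ℕ → N) (m : ℕ) : Prop where
  mul_self {i : ℕ} : i < m → x i * x i = 1
  commute {i j : ℕ} : i + 1 < j → j < m → Commute (x i) (x j)
  braid {i : ℕ} : i + 1 < m → x i * x (i + 1) * x i = x (i + 1) * x i * x (i + 1)

lemma isCoxeterFamily_extend {N : Type*} [Monoid N] {m : ℕ} {s : Fin m → N}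
    (hsq : ∀ i, s i * s i = 1)
    (hcomm : ∀ i j : Fin m, (i : ℕ) + 1 < j → Commute (s i) (s j))
    (hbraid : ∀ i j : Fin m, (j : ℕ) = i + 1 → s i * s j * s i = s j * s i * s j) :
    IsCoxeterFamily (Function.extend Fin.val s 1) m := by
  have hs {i : ℕ} (hi : i < m) : Function.extend Fin.val s 1 i = s ⟨i, hi⟩ :=
    Fin.val_injective.extend_apply s 1 ⟨i, hi⟩
  refine ⟨fun hi => ?_, fun hij hj => ?_, fun hi => ?_⟩
  · rw [hs hi, hsq]
  · rw [hs hj, hs (by omega)]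
    exact hcomm _ _ hij
  · rw [hs hi, hs (by omega), hbraid _ _ rfl]

lemma IsCoxeterFamily.prodMk {N P : Type*} [Monoid N] [Monoid P] {x : ℕ → N} {y : ℕ → P} {m : ℕ}
    (hx : IsCoxeterFamily x m) (hy : IsCoxeterFamily y m) :
    IsCoxeterFamily (fun i => (x i, y i)) m where
  mul_self hi := Prod.ext (hx.mul_self hi) (hy.mul_self hi)
  commute hij hj := Prod.ext (hx.commute hij hj) (hy.commute hij hj)
  braid hi := Prod.ext (hx.braid hi) (hy.braid hi)

lemma isCoxeterFamily_braidGen (n : ℕ) :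
    IsCoxeterFamily (Function.extend Fin.val (braidGen n) 1) (n - 1) :=
  isCoxeterFamily_extend (fun _ => Equiv.swap_mul_self _ _) (braidGen_comm n)
    fun i j h => braidGen_braid n i j h.symm

/-- The descending product `x (j + l - 1) * ⋯ * x (j + 1) * x j`. -/
def descProd {N : Type*} [Monoid N] (x : ℕ → N) (j : ℕ) : ℕ → N
  | 0 => 1
  | l + 1 => x (j + l) * descProd x j l

section Monoid

variable {N : Type*} [Monoid N] {x : ℕ → N} {m : ℕ}

lemma descProd_succ (x : ℕ → N) (j l : ℕ) :
    descProd x j (l + 1) = x (j + l) * descProd x j l := rfl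

lemma descProd_succ_right (x : ℕ → N) (j l : ℕ) :
    descProd x j (l + 1) = descProd x (j + 1) l * x j := by
  induction l with
  | zero => exact (mul_one _).trans (one_mul _).symm
  | succ l ih =>
    rw [descProd_succ, ih, descProd_succ, mul_assoc, show j + 1 + l = j + (l + 1) by omega]

lemma IsCoxeterFamily.commute_descProd (hx : IsCoxeterFamily x m) {j l i : ℕ} (hl : j + l ≤ m)
    (hi : i < m) (h : i + 1 < j ∨ j + l < i) : Commute (descProd x j l) (x i) := by
  induction l with
  | zero => exact Commute.one_left _
  | succ l ih =>
    refine Commute.mul_left ?_ (ih (by omega) (by omega))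
    rcases h with h | h
    · exact (hx.commute (by omega) (by omega)).symm
    · exact hx.commute (by omega) hi

lemma IsCoxeterFamily.descProd_mul_succ (hx : IsCoxeterFamily x m) {j l i : ℕ} (hl : j + l ≤ m)
    (hji : j ≤ i) (hi : i + 1 < j + l) :
    descProd x j l * x (i + 1) = x i * descProd x j l := by
  induction l with
  | zero => omega
  | succ l ih =>
    by_cases h : i + 1 < j + l
    · rw [descProd_succ, mul_assoc, ih (by omega) h, ← mul_assoc, ← mul_assoc,
        (hx.commute h (by omega)).eq]
    · obtain ⟨l, rfl⟩ : ∃ l', l = l' + 1 := ⟨l - 1, by omega⟩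
      obtain rfl : i = j + l := by omega
      calc descProd x j (l + 2) * x (j + l + 1)
          = x (j + l + 1) * x (j + l) * x (j + l + 1) * descProd x j l := by
            rw [descProd_succ, descProd_succ, mul_assoc, mul_assoc,
              (hx.commute_descProd (by omega) (by omega) (.inr (by omega))).eq]
            simp only [mul_assoc, add_assoc]
        _ = x (j + l) * descProd x j (l + 2) := by
            rw [← hx.braid (by omega), descProd_succ, descProd_succ]
            simp only [mul_assoc, add_assoc]

end Monoid

section Group

variable {N : Type*} [Group N] {x : ℕ → N} {m : ℕ}

lemma IsCoxeterFamily.exists_mul_descProd_mul (hx : IsCoxeterFamily x (m + 1)) {w : N}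
    (hw : w ∈ Subgroup.closure (x '' Set.Iio m)) {j l i : ℕ} (hjl : j + l = m + 1)
    (hi : i < m + 1) :
    ∃ w' ∈ Subgroup.closure (x '' Set.Iio m), ∃ j' l', j' + l' = m + 1 ∧
      w * descProd x j l * x i = w' * descProd x j' l' := by
  have hmul {i : ℕ} (hi : i < m) : w * x i ∈ Subgroup.closure (x '' Set.Iio m) :=
    mul_mem hw (Subgroup.subset_closure (Set.mem_image_of_mem x hi))
  obtain hij | rfl | rfl | hij : i + 1 < j ∨ i + 1 = j ∨ i = j ∨ j < i := by omega
  · refine ⟨w * x i, hmul (by omega), j, l, hjl, ?_⟩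
    rw [mul_assoc, (hx.commute_descProd hjl.le hi (.inl hij)).eq, mul_assoc]
  · exact ⟨w, hw, i, l + 1, by omega, by rw [descProd_succ_right, mul_assoc]⟩
  · obtain ⟨l, rfl⟩ : ∃ l', l = l' + 1 := ⟨l - 1, by omega⟩
    refine ⟨w, hw, i + 1, l, by omega, ?_⟩
    rw [descProd_succ_right, mul_assoc, mul_assoc, hx.mul_self hi, mul_one]
  · obtain ⟨i, rfl⟩ : ∃ i', i = i' + 1 := ⟨i - 1, by omega⟩
    refine ⟨w * x i, hmul (by omega), j, l, hjl, ?_⟩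
    rw [mul_assoc, hx.descProd_mul_succ hjl.le (by omega) (by omega), mul_assoc]

lemma IsCoxeterFamily.exists_eq_mul_descProd (hx : IsCoxeterFamily x (m + 1)) {h : N}
    (hh : h ∈ Subgroup.closure (x '' Set.Iio (m + 1))) :
    ∃ w ∈ Subgroup.closure (x '' Set.Iio m), ∃ j l, j + l = m + 1 ∧ h = w * descProd x j l := by
  induction hh using Subgroup.closure_induction_right with
  | one => exact ⟨1, one_mem _, m + 1, 0, rfl, (mul_one 1).symm⟩
  | mul_right y _ z hz ih =>
    obtain ⟨i, hi, rfl⟩ := hz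
    obtain ⟨w, hw, j, l, hjl, rfl⟩ := ih
    exact hx.exists_mul_descProd_mul hw hjl hi
  | mul_inv_cancel y _ z hz ih =>
    obtain ⟨i, hi, rfl⟩ := hz
    obtain ⟨w, hw, j, l, hjl, rfl⟩ := ih
    rw [inv_eq_of_mul_eq_one_left (hx.mul_self hi)]
    exact hx.exists_mul_descProd_mul hw hjl hi

lemma IsCoxeterFamily.mono (hx : IsCoxeterFamily x m) {m' : ℕ} (h : m' ≤ m) :
    IsCoxeterFamily x m' where
  mul_self hi := hx.mul_self (hi.trans_le h)
  commute hij hj := hx.commute hij (hj.trans_le h)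
  braid hi := hx.braid (hi.trans_le h)

section ToPerm

variable {n : ℕ} {π : N →* Equiv.Perm (Fin n)} (hπ : ∀ i : Fin (n - 1), π (x i) = braidGen n i)
include hπ

lemma map_apply_of_mem_closure {w : N} (hw : w ∈ Subgroup.closure (x '' Set.Iio m)) {t : Fin n}
    (ht : m < t) : π w t = t := by
  suffices Subgroup.closure (x '' Set.Iio m) ≤
      (MulAction.stabilizer (Equiv.Perm (Fin n)) t).comap π from this hw
  rw [Subgroup.closure_le]
  rintro _ ⟨i, hi, rfl⟩
  have hi : i < m := hi
  change π (x i) t = t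
  rw [hπ ⟨i, by omega⟩]
  exact braidGen_apply_of_ne (by simp only; omega) (by simp only; omega)

lemma map_descProd_apply {j l : ℕ} (h : j + l < n) :
    π (descProd x j l) ⟨j, by omega⟩ = ⟨j + l, h⟩ := by
  induction l with
  | zero => exact DFunLike.congr_fun (map_one π) _
  | succ l ih =>
    rw [descProd_succ, map_mul, Equiv.Perm.mul_apply, ih (by omega), hπ ⟨j + l, by omega⟩]
    exact braidGen_apply_left rfl rfl

lemma IsCoxeterFamily.eq_one_of_map_eq_one (hx : IsCoxeterFamily x m) (hm : m ≤ n - 1) {h : N}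
    (hh : h ∈ Subgroup.closure (x '' Set.Iio m)) (h1 : π h = 1) : h = 1 := by
  induction m generalizing h with
  | zero =>
    rwa [Set.Iio_zero_eq_empty, Set.image_empty, Subgroup.closure_empty, Subgroup.mem_bot] at hh
  | succ m ih =>
    obtain ⟨w, hw, j, l, hjl, rfl⟩ := hx.exists_eq_mul_descProd hh
    have hj : π (w * descProd x j l) ⟨j, by omega⟩ = ⟨j + l, by omega⟩ := by
      rw [map_mul, Equiv.Perm.mul_apply, map_descProd_apply hπ (by omega),
        map_apply_of_mem_closure hπ hw (by simp only; omega)]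
    obtain rfl : l = 0 := by
      rw [h1, Equiv.Perm.one_apply, Fin.mk.injEq] at hj
      omega
    rw [descProd, mul_one] at h1 ⊢
    exact ih (hx.mono m.le_succ) (by omega) hw h1

end ToPerm

lemma IsCoxeterFamily.exists_permHom {n : ℕ} (hx : IsCoxeterFamily x (n - 1)) :
    ∃ Φ : Equiv.Perm (Fin n) →* N, ∀ i : Fin (n - 1), Φ (braidGen n i) = x i := by
  let b := Function.extend Fin.val (braidGen n) 1
  have hb (i : Fin (n - 1)) : b i = braidGen n i := Fin.val_injective.extend_apply _ _ i
  let Γ := Subgroup.closure ((fun i => (b i, x i)) '' Set.Iio (n - 1))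
  have hgen (i : Fin (n - 1)) : (braidGen n i, x i) ∈ Γ :=
    Subgroup.subset_closure ⟨i, i.2, congrArg (·, x i) (hb i)⟩
  have hinj : Function.Injective ((MonoidHom.fst _ _).comp Γ.subtype) :=
    (injective_iff_map_eq_one _).2 fun γ hγ => Subtype.ext <|
      ((isCoxeterFamily_braidGen n).prodMk hx).eq_one_of_map_eq_one (π := MonoidHom.fst _ _)
        hb le_rfl γ.2 hγ
  have hsurj : Function.Surjective ((MonoidHom.fst _ _).comp Γ.subtype) := by
    rw [← MonoidHom.mrange_eq_top, eq_top_iff, ← mclosure_range_braidGen, Submonoid.closure_le]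
    rintro _ ⟨i, rfl⟩
    exact ⟨⟨_, hgen i⟩, rfl⟩
  obtain ⟨Φ, hΦ⟩ := Subgroup.exists_eq_graph (G := Γ) ⟨hinj, hsurj⟩
  exact ⟨Φ, fun i => MonoidHom.mem_graph.1 (hΦ ▸ hgen i)⟩

end Group

end SymmetricGroup

section Wreath

/-- The wreath product `G^n ⋊ Σ_n`. -/
abbrev SymWreath (G : Type) [Group G] (n : ℕ) : Type :=
  (Fin n → G) ⋊[permMulAut G n] Equiv.Perm (Fin n)

namespace SymWreath

variable {G : Type} [Group G] {n : ℕ}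

lemma permMulAut_mulSingle (σ : Equiv.Perm (Fin n)) (j : Fin n) (g : G) :
    permMulAut G n σ (Pi.mulSingle j g) = Pi.mulSingle (σ j) g :=
  Pi.mulSingle_comp_equiv σ.symm j g

/-- The element of `G^n ⋊ Σ_n` given by the `i`-th adjacent transposition. -/
def transposition (i : Fin (n - 1)) : SymWreath G n := SemidirectProduct.inr (braidGen n i)

/-- The element of `G^n ⋊ Σ_n` given by `g` in the `j`-th factor. -/
def label (j : Fin n) : G →* SymWreath G n :=
  SemidirectProduct.inl.comp (MonoidHom.mulSingle (fun _ => G) j)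

lemma transposition_mul_self (i : Fin (n - 1)) :
    (transposition i * transposition i : SymWreath G n) = 1 := by
  rw [transposition, ← map_mul, braidGen, Equiv.swap_mul_self, map_one]

lemma transposition_commute {i j : Fin (n - 1)} (h : (i : ℕ) + 1 < j) :
    Commute (transposition i : SymWreath G n) (transposition j) :=
  Commute.map (show Commute (braidGen n i) (braidGen n j) from braidGen_comm n i j h)
    SemidirectProduct.inr

lemma transposition_braid {i j : Fin (n - 1)} (h : (j : ℕ) = i + 1) :
    (transposition i * transposition j * transposition i : SymWreath G n) =
      transposition j * transposition i * transposition j := by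
  simp only [transposition, ← map_mul, braidGen_braid n i j h.symm]

lemma label_commute {j l : Fin n} (hjl : j ≠ l) (g h : G) : Commute (label j g) (label l h) :=
  (Pi.mulSingle_commute (f := fun _ => G) hjl g h).map SemidirectProduct.inl

lemma transposition_mul_label (i : Fin (n - 1)) (j : Fin n) (g : G) :
    transposition i * label j g = label (braidGen n i j) g * transposition i := by
  simp only [transposition, label, MonoidHom.comp_apply, MonoidHom.mulSingle_apply]
  rw [← permMulAut_mulSingle, SemidirectProduct.inl_aut, mul_assoc, ← map_mul, inv_mul_cancel,
    map_one, mul_one]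

lemma hom_ext {N : Type*} [Monoid N] {φ ψ : SymWreath G n →* N}
    (hs : ∀ i, φ (transposition i) = ψ (transposition i))
    (ht : ∀ j g, φ (label j g) = ψ (label j g)) : φ = ψ := by
  have hl : φ.comp SemidirectProduct.inl = ψ.comp SemidirectProduct.inl :=
    MonoidHom.pi_ext ht
  have hr : φ.comp SemidirectProduct.inr = ψ.comp SemidirectProduct.inr := by
    refine MonoidHom.eq_of_eqOn_denseM (mclosure_range_braidGen n) ?_
    rintro _ ⟨i, rfl⟩
    exact hs i
  ext w
  rw [← SemidirectProduct.inl_left_mul_inr_right w, map_mul, map_mul]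
  exact congrArg₂ (· * ·) (DFunLike.congr_fun hl _) (DFunLike.congr_fun hr _)

lemma exists_hom {N : Type*} [Group N] {x : ℕ → N} (hx : IsCoxeterFamily x (n - 1))
    {τ : Fin n → G →* N} (hτ : Pairwise fun i j => ∀ g h, Commute (τ i g) (τ j h))
    (hxτ : ∀ (i : Fin (n - 1)) j g, SemiconjBy (x i) (τ j g) (τ (braidGen n i j) g)) :
    ∃ Θ : SymWreath G n →* N,
      (∀ i : Fin (n - 1), Θ (transposition i) = x i) ∧ ∀ j g, Θ (label j g) = τ j g := by
  obtain ⟨Φ, hΦ⟩ := hx.exists_permHom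
  have hΦτ (σ : Equiv.Perm (Fin n)) : ∀ j g, SemiconjBy (Φ σ) (τ j g) (τ (σ j) g) := by
    induction (mclosure_range_braidGen n ▸ Submonoid.mem_top σ :
      σ ∈ Submonoid.closure (Set.range (braidGen n))) using Submonoid.closure_induction with
    | mem y hy =>
      obtain ⟨i, rfl⟩ := hy
      exact fun j g => (hΦ i).symm ▸ hxτ i j g
    | one => exact fun j g => (map_one Φ).symm ▸ SemiconjBy.one_left _
    | mul a b _ _ ha hb =>
      intro j g
      rw [map_mul]
      exact (ha (b j) g).mul_left (hb j g)
  let T : (Fin n → G) →* N := MonoidHom.noncommPiCoprod τ hτ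
  have hT (j : Fin n) (g : G) : T (Pi.mulSingle j g) = τ j g :=
    MonoidHom.noncommPiCoprod_mulSingle (N := fun _ => G) τ (hcomm := hτ) j g
  have hTΦ (σ : Equiv.Perm (Fin n)) :
      T.comp (permMulAut G n σ).toMonoidHom = (MulAut.conj (Φ σ)).toMonoidHom.comp T := by
    refine MonoidHom.pi_ext fun j g => ?_
    change T (permMulAut G n σ (Pi.mulSingle j g)) = Φ σ * T (Pi.mulSingle j g) * (Φ σ)⁻¹
    rw [permMulAut_mulSingle, hT, hT, eq_mul_inv_iff_mul_eq]
    exact (hΦτ σ j g).symm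
  exact ⟨SemidirectProduct.lift T Φ hTΦ, fun i => (SemidirectProduct.lift_inr _ _ _ _).trans (hΦ i),
    fun j g => (SemidirectProduct.lift_inl _ _ _ _).trans (hT j g)⟩

end SymWreath

end Wreath

section ComplIdempotent

variable {ι A R : Type*} [Fintype ι] [Ring A] [Ring R] {e : ι → A}

/-- The product of the complements `1 - e i` of a finite commuting family `e`. When the `e i` are
idempotent, it is the idempotent complementary to their join. -/
def complIdempotent (e : ι → A) (he : ∀ i j, Commute (e i) (e j)) : A :=
  Finset.univ.noncommProd (fun i => 1 - e i) <| Pairwise.set_pairwise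
    (fun i j _ => (Commute.one_left _).sub_left ((Commute.one_right _).sub_right (he i j))) _

variable (he : ∀ i j, Commute (e i) (e j))

lemma mul_complIdempotent_of_forall_mul_eq_zero {a : A} (ha : ∀ i, a * e i = 0) :
    a * complIdempotent e he = a :=
  Finset.noncommProd_induction _ _ _ (fun x => a * x = a)
    (fun x y hx hy => by rw [← mul_assoc, hx, hy]) (mul_one a)
    fun i _ => by rw [mul_sub, mul_one, ha, sub_zero]

lemma complIdempotent_mul_of_forall_mul_eq_zero {a : A} (ha : ∀ i, e i * a = 0) :
    complIdempotent e he * a = a :=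
  Finset.noncommProd_induction _ _ _ (fun x => x * a = a)
    (fun x y hx hy => by rw [mul_assoc, hy, hx]) (one_mul a)
    fun i _ => by rw [sub_mul, one_mul, ha, sub_zero]

lemma map_complIdempotent (φ : A →+* R) (hφ : ∀ i, φ (e i) = 0) :
    φ (complIdempotent e he) = 1 :=
  Finset.noncommProd_induction _ _ _ (fun x => φ x = 1)
    (fun x y hx hy => by rw [map_mul, hx, hy, one_mul]) (map_one φ)
    fun i _ => by rw [map_sub, map_one, hφ, sub_zero]

variable (hid : ∀ i, IsIdempotentElem (e i))
include hid

lemma mul_complIdempotent (i : ι) : e i * complIdempotent e he = 0 := by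
  classical
  rw [complIdempotent, ← Finset.mul_noncommProd_erase _ (Finset.mem_univ i), ← mul_assoc,
    (hid i).mul_one_sub_self, zero_mul]

lemma complIdempotent_mul (i : ι) : complIdempotent e he * e i = 0 := by
  classical
  rw [complIdempotent, ← Finset.noncommProd_erase_mul _ (Finset.mem_univ i), mul_assoc,
    (hid i).one_sub_mul_self, mul_zero]

lemma isIdempotentElem_complIdempotent : IsIdempotentElem (complIdempotent e he) :=
  mul_complIdempotent_of_forall_mul_eq_zero he (complIdempotent_mul he hid)

lemma commute_complIdempotent_of_semiconjBy {a : A} {σ : ι → ι} (hσ : Function.Surjective σ)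
    (ha : ∀ i, SemiconjBy a (e i) (e (σ i))) : Commute a (complIdempotent e he) := by
  have hleft (i : ι) : complIdempotent e he * a * e i = 0 := by
    rw [mul_assoc, (ha i).eq, ← mul_assoc, complIdempotent_mul he hid, zero_mul]
  have hright (i : ι) : e i * (a * complIdempotent e he) = 0 := by
    obtain ⟨i, rfl⟩ := hσ i
    rw [← mul_assoc, ← (ha i).eq, mul_assoc, mul_complIdempotent he hid, mul_zero]
  calc a * complIdempotent e he
      = complIdempotent e he * (a * complIdempotent e he) :=
        (complIdempotent_mul_of_forall_mul_eq_zero he hright).symm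
    _ = complIdempotent e he * a * complIdempotent e he := (mul_assoc _ _ _).symm
    _ = complIdempotent e he * a := mul_complIdempotent_of_forall_mul_eq_zero he hleft

end ComplIdempotent

section RookAlgebra

variable {k G : Type} [CommRing k] [Group G] {n : ℕ}

/-- The element of the rook algebra given by a generating diagram. -/
def rookGen (ε : k) (x : GRGen n G) : GRAlg k G n ε :=
  RingQuot.mkAlgHom k (GRRel k G n ε) (FreeAlgebra.ι k x)

variable {ε : k}

lemma adjoin_range_rookGen : Algebra.adjoin k (Set.range (rookGen (G := G) (n := n) ε)) = ⊤ := by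
  rw [show rookGen (G := G) (n := n) ε = RingQuot.mkAlgHom k _ ∘ FreeAlgebra.ι k from rfl,
    Set.range_comp, ← AlgHom.map_adjoin, FreeAlgebra.adjoin_range_ι, Algebra.map_top,
    AlgHom.range_eq_top]
  exact RingQuot.mkAlgHom_surjective k _

lemma mem_adjoin_range_rookGen (a : GRAlg k G n ε) :
    a ∈ Algebra.adjoin k (Set.range (rookGen (G := G) (n := n) ε)) := by
  rw [adjoin_range_rookGen]
  exact Algebra.mem_top

lemma GRAlg_algHom_ext {R : Type*} [Ring R] [Algebra k R] {φ ψ : GRAlg k G n ε →ₐ[k] R}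
    (h : ∀ x, φ (rookGen ε x) = ψ (rookGen ε x)) : φ = ψ :=
  AlgHom.ext_of_adjoin_eq_top adjoin_range_rookGen (Set.forall_mem_range.2 h)

lemma GRaug_rookGen (x : GRGen n G) : GRaug k G n ε (rookGen ε x) =
    match x with
    | .s _ => 1
    | .p _ => 0
    | .t _ _ => 1 := by
  rw [GRaug, rookGen, RingQuot.liftAlgHom_mkAlgHom_apply, FreeAlgebra.lift_ι_apply]

lemma lift_rookGen_eq_of_rel {x y : FreeAlgebra k (GRGen n G)} (h : GRRel k G n ε x y) :
    FreeAlgebra.lift k (rookGen ε) x = FreeAlgebra.lift k (rookGen ε) y := by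
  have hmk : FreeAlgebra.lift k (rookGen ε) = RingQuot.mkAlgHom k (GRRel k G n ε) :=
    FreeAlgebra.hom_ext (FreeAlgebra.ι_comp_lift _)
  rw [hmk, RingQuot.mkAlgHom_rel k h]

section Relations

variable (i : Fin (n - 1)) (j l : Fin n) (g : G)

lemma rookGen_s_mul_self :
    (rookGen ε (.s i) * rookGen ε (.s i) : GRAlg k G n ε) = 1 := by
  simpa only [map_mul, map_one, FreeAlgebra.lift_ι_apply] using
    lift_rookGen_eq_of_rel (GRRel.s_sq (ε := ε) i)

lemma rookGen_s_commute {i j : Fin (n - 1)} (h : (i : ℕ) + 1 < j) :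
    Commute (rookGen ε (.s i) : GRAlg k G n ε) (rookGen ε (.s j)) := by
  simpa only [commute_iff_eq, map_mul, FreeAlgebra.lift_ι_apply] using
    lift_rookGen_eq_of_rel (GRRel.ss_comm (ε := ε) i j h)

lemma rookGen_s_braid {i j : Fin (n - 1)} (h : (j : ℕ) = i + 1) :
    (rookGen ε (.s i) * rookGen ε (.s j) * rookGen ε (.s i) : GRAlg k G n ε) =
      rookGen ε (.s j) * rookGen ε (.s i) * rookGen ε (.s j) := by
  simpa only [map_mul, FreeAlgebra.lift_ι_apply] using
    lift_rookGen_eq_of_rel (GRRel.s_braid (ε := ε) i j h)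

lemma rookGen_t_one : (rookGen ε (.t 1 j) : GRAlg k G n ε) = 1 := by
  simpa only [map_one, FreeAlgebra.lift_ι_apply] using
    lift_rookGen_eq_of_rel (GRRel.t_one (ε := ε) j)

lemma rookGen_t_mul (g h : G) :
    (rookGen ε (.t (g * h) j) : GRAlg k G n ε) = rookGen ε (.t g j) * rookGen ε (.t h j) := by
  simpa only [map_mul, FreeAlgebra.lift_ι_apply] using
    (lift_rookGen_eq_of_rel (GRRel.t_mul (ε := ε) g h j)).symm

lemma rookGen_t_commute {j l : Fin n} (hjl : j ≠ l) (g h : G) :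
    Commute (rookGen ε (.t g j) : GRAlg k G n ε) (rookGen ε (.t h l)) := by
  simpa only [commute_iff_eq, map_mul, FreeAlgebra.lift_ι_apply] using
    lift_rookGen_eq_of_rel (GRRel.tt_comm (ε := ε) g h j l hjl)

lemma rookGen_p_mul_self :
    (rookGen ε (.p j) * rookGen ε (.p j) : GRAlg k G n ε) = ε • rookGen ε (.p j) := by
  simpa only [map_mul, map_smul, FreeAlgebra.lift_ι_apply] using
    lift_rookGen_eq_of_rel (GRRel.p_sq (ε := ε) j)

lemma rookGen_p_commute : Commute (rookGen ε (.p j) : GRAlg k G n ε) (rookGen ε (.p l)) := by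
  wlog h : j < l generalizing j l
  · obtain rfl | h := (not_lt.1 h).eq_or_lt
    · rfl
    · exact (this l j h).symm
  simpa only [commute_iff_eq, map_mul, FreeAlgebra.lift_ι_apply] using
    lift_rookGen_eq_of_rel (GRRel.pp_comm (ε := ε) j l h)

lemma rookGen_t_commute_p :
    Commute (rookGen ε (.t g j) : GRAlg k G n ε) (rookGen ε (.p l)) := by
  rw [commute_iff_eq]
  by_cases h : j = l
  · subst h
    simpa only [map_mul, FreeAlgebra.lift_ι_apply] using (lift_rookGen_eq_of_rel
      (GRRel.tp_absorb (ε := ε) g j)).trans (lift_rookGen_eq_of_rel (.pt_absorb g j)).symm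
  · simpa only [map_mul, FreeAlgebra.lift_ι_apply] using
      lift_rookGen_eq_of_rel (GRRel.tp_comm (ε := ε) g j l h)

lemma rookGen_s_semiconjBy_t : SemiconjBy (rookGen ε (.s i) : GRAlg k G n ε)
    (rookGen ε (.t g j)) (rookGen ε (.t g (braidGen n i j))) := by
  have h : GRRel k G n ε (GRs k G n i * GRt k G n g j)
      (GRt k G n g (braidGen n i j) * GRs k G n i) :=
    braidGen_apply_cases (P := fun j j' => GRRel k G n ε (GRs k G n i * GRt k G n g j)
      (GRt k G n g j' * GRs k G n i)) i j (.st_comm g i) (.st_slide g i) (.st_slide' g i)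
  simpa only [SemiconjBy, map_mul, FreeAlgebra.lift_ι_apply] using
    lift_rookGen_eq_of_rel h

lemma rookGen_s_semiconjBy_p : SemiconjBy (rookGen ε (.s i) : GRAlg k G n ε)
    (rookGen ε (.p j)) (rookGen ε (.p (braidGen n i j))) := by
  have h : GRRel k G n ε (GRs k G n i * GRp k G n j) (GRp k G n (braidGen n i j) * GRs k G n i) :=
    braidGen_apply_cases (P := fun j j' => GRRel k G n ε (GRs k G n i * GRp k G n j)
      (GRp k G n j' * GRs k G n i)) i j (.sp_comm i) (.sp_slide i) (.sp_slide' i)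
  simpa only [SemiconjBy, map_mul, FreeAlgebra.lift_ι_apply] using lift_rookGen_eq_of_rel h

end Relations

open SymWreath

/-- The image of a generating diagram in `k[G^n ⋊ Σ_n]`, on which diagrams with a deleted strand
vanish. -/
def wreathGen : GRGen n G → MonoidAlgebra k (SymWreath G n)
  | .s i => MonoidAlgebra.of k _ (transposition i)
  | .p _ => 0
  | .t g j => MonoidAlgebra.of k _ (label j g)

lemma lift_wreathGen_eq_of_rel {x y : FreeAlgebra k (GRGen n G)} (h : GRRel k G n ε x y) :
    FreeAlgebra.lift k (wreathGen (k := k)) x = FreeAlgebra.lift k (wreathGen (k := k)) y := by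
  cases h with
  | s_sq i =>
    simp only [map_mul, map_one, FreeAlgebra.lift_ι_apply, wreathGen]
    rw [← map_mul, transposition_mul_self, map_one]
  | s_braid i j h =>
    simp only [map_mul, FreeAlgebra.lift_ι_apply, wreathGen]
    simp only [← map_mul, transposition_braid h]
  | ss_comm i j h =>
    simp only [map_mul, FreeAlgebra.lift_ι_apply, wreathGen]
    exact (transposition_commute h).map (MonoidAlgebra.of k _)
  | t_mul g h j => simp only [map_mul, FreeAlgebra.lift_ι_apply, wreathGen]
  | t_one j => simp only [map_one, FreeAlgebra.lift_ι_apply, wreathGen]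
  | tt_comm g h j l hjl =>
    simp only [map_mul, FreeAlgebra.lift_ι_apply, wreathGen]
    exact (label_commute hjl g h).map (MonoidAlgebra.of k _)
  | st_comm g i j h =>
    simp only [map_mul, FreeAlgebra.lift_ι_apply, wreathGen]
    rw [← map_mul, transposition_mul_label, braidGen_apply_of_ne h.1 h.2, map_mul]
  | st_slide g i j j' h h' =>
    simp only [map_mul, FreeAlgebra.lift_ι_apply, wreathGen]
    rw [← map_mul, transposition_mul_label, braidGen_apply_left h h', map_mul]
  | st_slide' g i j j' h h' =>
    simp only [map_mul, FreeAlgebra.lift_ι_apply, wreathGen]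
    rw [← map_mul, transposition_mul_label, braidGen_apply_right h h', map_mul]
  | _ =>
    simp only [map_mul, map_smul, FreeAlgebra.lift_ι_apply, wreathGen, mul_zero, zero_mul,
      smul_zero]

/-- The projection `GR_n(ε) → k[G^n ⋊ Σ_n]` killing the diagrams with a deleted strand. -/
def rookToWreath (ε : k) : GRAlg k G n ε →ₐ[k] MonoidAlgebra k (SymWreath G n) :=
  RingQuot.liftAlgHom k ⟨FreeAlgebra.lift k wreathGen, fun _ _ => lift_wreathGen_eq_of_rel⟩

lemma rookToWreath_rookGen (x : GRGen n G) : rookToWreath ε (rookGen ε x) = wreathGen x := by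
  rw [rookToWreath, rookGen, RingQuot.liftAlgHom_mkAlgHom_apply, FreeAlgebra.lift_ι_apply]

lemma groupAug_rookToWreath (a : GRAlg k G n ε) :
    groupAug k (SymWreath G n) (rookToWreath ε a) = GRaug k G n ε a := by
  suffices (groupAug k (SymWreath G n)).comp (rookToWreath ε) = GRaug k G n ε from
    DFunLike.congr_fun this a
  refine GRAlg_algHom_ext fun x => ?_
  rw [AlgHom.comp_apply, rookToWreath_rookGen, GRaug_rookGen]
  cases x with
  | p j => exact map_zero _
  | s i => exact MonoidAlgebra.lift_of ..
  | t g j => exact MonoidAlgebra.lift_of ..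

variable (k G n ε) in
lemma exists_wreath_hom : ∃ Θ : SymWreath G n →* GRAlg k G n ε,
    (∀ i, Θ (transposition i) = rookGen ε (.s i)) ∧
      ∀ j g, Θ (label j g) = rookGen ε (.t g j) := by
  let s (i : Fin (n - 1)) : (GRAlg k G n ε)ˣ :=
    ⟨rookGen ε (.s i), rookGen ε (.s i), rookGen_s_mul_self i, rookGen_s_mul_self i⟩
  let t (j : Fin n) : G →* (GRAlg k G n ε)ˣ :=
    MonoidHom.toHomUnits ⟨⟨fun g => rookGen ε (.t g j), rookGen_t_one j⟩, rookGen_t_mul j⟩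
  have hs (i : Fin (n - 1)) : Function.extend Fin.val s 1 i = s i :=
    Fin.val_injective.extend_apply s 1 i
  obtain ⟨Θ, hΘs, hΘt⟩ := SymWreath.exists_hom
    (isCoxeterFamily_extend (s := s) (fun i => Units.ext (rookGen_s_mul_self i))
      (fun _ _ h => Units.ext (rookGen_s_commute h)) fun _ _ h => Units.ext (rookGen_s_braid h))
    (τ := t) (fun _ _ hjl g h => Units.ext (rookGen_t_commute hjl g h)) fun i j g => by
      rw [hs]
      exact Units.ext (rookGen_s_semiconjBy_t i j g)
  refine ⟨(Units.coeHom _).comp Θ, fun i => ?_, fun j g => congrArg Units.val (hΘt j g)⟩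
  exact congrArg Units.val ((hΘs i).trans (hs i))

variable (k G n ε) in
lemma exists_wreathToRook : ∃ σ : MonoidAlgebra k (SymWreath G n) →ₐ[k] GRAlg k G n ε,
    (∀ i, σ (wreathGen (.s i)) = rookGen ε (.s i)) ∧
      ∀ g j, σ (wreathGen (.t g j)) = rookGen ε (.t g j) := by
  obtain ⟨Θ, hs, ht⟩ := exists_wreath_hom k G n ε
  exact ⟨MonoidAlgebra.lift k _ _ Θ, fun i => (MonoidAlgebra.lift_of ..).trans (hs i),
    fun g j => (MonoidAlgebra.lift_of ..).trans (ht j g)⟩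

lemma rookToWreath_wreathToRook {σ : MonoidAlgebra k (SymWreath G n) →ₐ[k] GRAlg k G n ε}
    (hs : ∀ i, σ (wreathGen (.s i)) = rookGen ε (.s i))
    (ht : ∀ g j, σ (wreathGen (.t g j)) = rookGen ε (.t g j))
    (b : MonoidAlgebra k (SymWreath G n)) : rookToWreath ε (σ b) = b := by
  suffices (rookToWreath ε).comp σ = AlgHom.id k _ from DFunLike.congr_fun this b
  refine (MonoidAlgebra.lift k _ _).symm.injective (hom_ext (fun i => ?_) fun j g => ?_)
  · exact (congrArg _ (hs i)).trans (rookToWreath_rookGen _)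
  · exact (congrArg _ (ht g j)).trans (rookToWreath_rookGen _)

section Unit

variable (u : kˣ)

/-- The idempotent `p_j / ε` of the rook algebra, for invertible `ε`. -/
def rookIdempotent (j : Fin n) : GRAlg k G n u := u⁻¹ • rookGen (u : k) (.p j)

lemma isIdempotentElem_rookIdempotent (j : Fin n) :
    IsIdempotentElem (rookIdempotent u j : GRAlg k G n u) := by
  rw [IsIdempotentElem, rookIdempotent, smul_mul_smul_comm, rookGen_p_mul_self, ← Units.smul_def,
    smul_smul, inv_mul_cancel_right]

lemma rookIdempotent_commute (j l : Fin n) :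
    Commute (rookIdempotent u j : GRAlg k G n u) (rookIdempotent u l) :=
  ((rookGen_p_commute j l).smul_left _).smul_right _

/-- The idempotent `∏ (1 - p_j / ε)` of the rook algebra, which kills every diagram with a deleted
strand. -/
def fullRankIdempotent : GRAlg k G n u :=
  complIdempotent (rookIdempotent u) (rookIdempotent_commute u)

lemma isIdempotentElem_fullRankIdempotent :
    IsIdempotentElem (fullRankIdempotent u : GRAlg k G n u) :=
  isIdempotentElem_complIdempotent _ (isIdempotentElem_rookIdempotent u)

lemma fullRankIdempotent_mul_rookGen_p (j : Fin n) :
    (fullRankIdempotent u * rookGen (u : k) (.p j) : GRAlg k G n u) = 0 := by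
  have h : rookGen (u : k) (.p j) = u • (rookIdempotent u j : GRAlg k G n u) :=
    (smul_inv_smul u _).symm
  rw [h, mul_smul_comm, fullRankIdempotent,
    complIdempotent_mul _ (isIdempotentElem_rookIdempotent u), smul_zero]

lemma GRaug_fullRankIdempotent : GRaug k G n u (fullRankIdempotent u) = 1 := by
  refine map_complIdempotent _ (GRaug k G n u : GRAlg k G n u →+* k) fun j => ?_
  change GRaug k G n u ((u⁻¹ : kˣ) • _) = 0
  rw [Units.smul_def, map_smul, GRaug_rookGen, smul_zero]

lemma fullRankIdempotent_mem_center :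
    (fullRankIdempotent u : GRAlg k G n u) ∈ Subalgebra.center k (GRAlg k G n u) := by
  have hsemiconj {a : GRAlg k G n u} {σ : Fin n → Fin n} (hσ : Function.Surjective σ)
      (ha : ∀ j, SemiconjBy a (rookGen (u : k) (.p j)) (rookGen (u : k) (.p (σ j)))) :
      Commute (fullRankIdempotent u) a :=
    (commute_complIdempotent_of_semiconjBy _ (isIdempotentElem_rookIdempotent u) hσ fun j => by
      rw [SemiconjBy, rookIdempotent, rookIdempotent, mul_smul_comm, (ha j).eq,
        smul_mul_assoc]).symm
  refine Subalgebra.mem_center_iff.2 fun a => ?_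
  refine (Algebra.commute_of_mem_adjoin_of_forall_mem_commute (mem_adjoin_range_rookGen a) ?_).symm
  rintro _ ⟨x, rfl⟩
  cases x with
  | s i => exact hsemiconj (braidGen n i).surjective (rookGen_s_semiconjBy_p i)
  | p j => exact hsemiconj Function.surjective_id (rookGen_p_commute j)
  | t g j => exact hsemiconj Function.surjective_id (rookGen_t_commute_p j · g)

lemma fullRankIdempotent_mul_wreathToRook
    {σ : MonoidAlgebra k (SymWreath G n) →ₐ[k] GRAlg k G n u}
    (hs : ∀ i, σ (wreathGen (.s i)) = rookGen (u : k) (.s i))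
    (ht : ∀ g j, σ (wreathGen (.t g j)) = rookGen (u : k) (.t g j)) (a : GRAlg k G n u) :
    fullRankIdempotent u * σ (rookToWreath (u : k) a) = fullRankIdempotent u * a := by
  induction mem_adjoin_range_rookGen a using Algebra.adjoin_induction with
  | mem _ hx =>
    obtain ⟨x, rfl⟩ := hx
    rw [rookToWreath_rookGen]
    cases x with
    | s i => rw [hs]
    | p j => rw [fullRankIdempotent_mul_rookGen_p, wreathGen, map_zero, mul_zero]
    | t g j => rw [ht]
  | algebraMap r => rw [AlgHom.commutes, AlgHom.commutes]
  | add a b _ _ ha hb => rw [map_add, map_add, mul_add, mul_add, ha, hb]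
  | mul a b _ _ ha hb =>
    have hcenter := Subalgebra.mem_center_iff.1 (fullRankIdempotent_mem_center (G := G) (n := n) u)
    rw [map_mul, map_mul, ← mul_assoc, ha, ← hcenter, mul_assoc, hb, ← mul_assoc, hcenter,
      mul_assoc]

end Unit

end RookAlgebra

/-- **Homology of `G`-equivariant rook algebras** (invertible parameter).
Let `G` be a group, `k` a commutative `G`-ring, `n` a natural number, and `ε ∈ k`
invertible.  Then there is an isomorphism of graded `k`-modules
`Tor_*^{GR_n(ε)}(𝟙,𝟙) ≅ Tor_*^{k[G^n ⋊ Σ_n]}(k,k) = H_*(G^n ⋊ Σ_n; k)`,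
where `Σ_n` acts on `G^n` by permuting the factors. -/
theorem equivariant_rook_homology (k G : Type) [CommRing k] [Group G]
    (ρ : G →* RingAut k) (n : ℕ) (ε : k) (hε : IsUnit ε) (q : ℕ) :
    Nonempty ((barTor k (GRAlg k G n ε) (GRaug k G n ε) q) ≃ₗ[k]
      (groupTor k ((Fin n → G) ⋊[permMulAut G n] Equiv.Perm (Fin n)) q)) := by
  obtain ⟨u, rfl⟩ := hε
  obtain ⟨σ, hs, ht⟩ := exists_wreathToRook k G n (u : k)
  exact ⟨barTorEquivOfRetract (fullRankIdempotent_mem_center u)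
    (isIdempotentElem_fullRankIdempotent u) (GRaug_fullRankIdempotent u) (rookToWreath (u : k)) σ
    groupAug_rookToWreath (rookToWreath_wreathToRook hs ht)
    (fullRankIdempotent_mul_wreathToRook u hs ht) q⟩
end
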